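/- For every real number x with 0 < x ≤ 1, the derivative of the Hurwitz zeta function at s = 0 satisfies (d/ds) ζ_H(s, x)|_{s=0} = log Γ(x) - (1/2) log(2π), where Γ is the classical Gamma function. -/

import Mathlib

open Filter Topology

namespace LerchFormula

/-- The region `{-1/2 < re s, ‖s‖ < 3}`, on which the regularized Hurwitz series converges
uniformly. -/
def region : Set ℂ := {s : ℂ | -1 / 2 < s.re} ∩ Metric.ball 0 3

lemma isOpen_region : IsOpen region :=
  (isOpen_lt continuous_const Complex.continuous_re).inter Metric.isOpen_ball

lemma isPreconnected_region : IsPreconnected region :=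
  ((convex_halfSpace_re_gt _).inter (convex_ball 0 3)).isPreconnected

lemma zero_mem_region : (0 : ℂ) ∈ region := by
  constructor <;> norm_num

lemma two_mem_region : (2 : ℂ) ∈ region := by
  constructor <;> norm_num

/-- The term `(n + x)⁻ˢ - (n + 1)⁻ˢ`, minus its first order Taylor approximation
at `n + 1`. -/
noncomputable def term (x : ℝ) (n : ℕ) (s : ℂ) : ℂ :=
  ((n + x : ℝ) : ℂ) ^ (-s) - ((n + 1 : ℝ) : ℂ) ^ (-s)
    - (1 - x) * s * ((n + 1 : ℝ) : ℂ) ^ (-s - 1)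

lemma hasDerivAt_ofReal_cpow_of_pos (r : ℂ) {t : ℝ} (ht : 0 < t) :
    HasDerivAt (fun t : ℝ => (t : ℂ) ^ r) (r * (t : ℂ) ^ (r - 1)) t := by
  have h := ((hasDerivAt_id (t : ℂ)).cpow_const (c := r)
    (Complex.ofReal_mem_slitPlane.mpr ht)).comp_ofReal
  simpa using h

lemma rpow_le_add_of_mem_Icc {a t p q r : ℝ} (ha : 0 < a) (hat : a ≤ t) (hp : 0 ≤ p)
    (hr : r ∈ Set.Icc p q) : t ^ (-r) ≤ 1 / a ^ p + 1 / a ^ q := by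
  have hq : 0 ≤ q := hp.trans (hr.1.trans hr.2)
  have ht : 0 < t := ha.trans_le hat
  have key : ∀ u : ℝ, 0 ≤ u → t ^ (-u) ≤ 1 / a ^ u := fun u hu => by
    rw [one_div, ← Real.rpow_neg ha.le]
    exact Real.rpow_le_rpow_of_nonpos ha hat (by linarith)
  rcases le_total 1 t with h | h
  · calc t ^ (-r) ≤ t ^ (-p) := Real.rpow_le_rpow_of_exponent_le h (by linarith [hr.1])
      _ ≤ 1 / a ^ p := key p hp
      _ ≤ _ := by simp only [le_add_iff_nonneg_right]; positivity
  · calc t ^ (-r) ≤ t ^ (-q) :=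
          Real.rpow_le_rpow_of_exponent_ge ht h (by linarith [hr.2])
      _ ≤ 1 / a ^ q := key q hq
      _ ≤ _ := by simp only [le_add_iff_nonneg_left]; positivity

lemma norm_taylor_cpow_le {a b M : ℝ} (ha : 0 < a) (hab : a ≤ b) (hba : b ≤ a + 1) (s : ℂ)
    (hM : ∀ t ∈ Set.Icc a b, ‖s * (s + 1) * (t : ℂ) ^ (-s - 2)‖ ≤ M) :
    ‖(a : ℂ) ^ (-s) - (b : ℂ) ^ (-s) - (b - a) * s * (b : ℂ) ^ (-s - 1)‖ ≤ M := by
  have hM0 : 0 ≤ M := (norm_nonneg _).trans (hM a ⟨le_rfl, hab⟩)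
  have hpos : ∀ t ∈ Set.Icc a b, 0 < t := fun t ht => ha.trans_le ht.1
  have hderiv : ∀ t ∈ Set.Icc a b,
      ‖-s * (t : ℂ) ^ (-s - 1) - -s * (b : ℂ) ^ (-s - 1)‖ ≤ M := fun t ht => by
    have h := (convex_Icc a b).norm_image_sub_le_of_norm_hasDerivWithin_le
      (f := fun t : ℝ => -s * (t : ℂ) ^ (-s - 1))
      (f' := fun t : ℝ => s * (s + 1) * (t : ℂ) ^ (-s - 2))
      (fun t ht => by
        have h := ((hasDerivAt_ofReal_cpow_of_pos (-s - 1) (hpos t ht)).const_mul (-s))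
        convert h.hasDerivWithinAt using 1
        rw [show -s - 1 - 1 = -s - 2 by ring]
        ring) hM (Set.right_mem_Icc.mpr hab) ht
    refine h.trans (mul_le_of_le_one_right hM0 ?_)
    rw [Real.norm_eq_abs, abs_le]
    constructor <;> linarith [ht.1, ht.2]
  have h := (convex_Icc a b).norm_image_sub_le_of_norm_hasDerivWithin_le
      (f := fun t : ℝ => (t : ℂ) ^ (-s) - (t : ℂ) * (-s * (b : ℂ) ^ (-s - 1)))
      (f' := fun t : ℝ => -s * (t : ℂ) ^ (-s - 1) - -s * (b : ℂ) ^ (-s - 1))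
      (fun t ht => by
        have h := (hasDerivAt_ofReal_cpow_of_pos (-s) (hpos t ht)).sub
          (((hasDerivAt_id (t : ℂ)).comp_ofReal).mul_const (-s * (b : ℂ) ^ (-s - 1)))
        convert! h.hasDerivWithinAt using 1
        ring) hderiv (Set.right_mem_Icc.mpr hab) (Set.left_mem_Icc.mpr hab)
  calc _ = _ := by
        congr 1
        ring
    _ ≤ _ := h
    _ ≤ M := mul_le_of_le_one_right hM0 (by
        rw [Real.norm_eq_abs, abs_le]
        constructor <;> linarith)

lemma norm_term_le {x : ℝ} (hx0 : 0 < x) (hx1 : x ≤ 1) (n : ℕ) {s : ℂ} (hs : s ∈ region) :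
    ‖term x n s‖ ≤ 12 * (1 / |n + x| ^ (3 / 2 : ℝ) + 1 / |n + x| ^ (5 : ℝ)) := by
  have ha : 0 < n + x := by positivity
  obtain ⟨hre, hball⟩ := hs
  replace hre : -1 / 2 < s.re := hre
  have hn : ‖s‖ < 3 := by simpa using hball
  have hre' : s.re ≤ 3 := (Complex.re_le_norm s).trans hn.le
  rw [abs_of_pos ha]
  have h := norm_taylor_cpow_le (b := n + 1) ha (by linarith) (by linarith) s
    (M := 12 * (1 / (n + x) ^ (3 / 2 : ℝ) + 1 / (n + x) ^ (5 : ℝ))) (fun t ht => by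
      have ht0 : 0 < t := ha.trans_le ht.1
      rw [norm_mul, norm_mul, Complex.norm_cpow_eq_rpow_re_of_pos ht0]
      have h1 : ‖s + 1‖ ≤ 4 := (norm_add_le _ _).trans (by rw [norm_one]; linarith)
      have h2 : ‖s‖ * ‖s + 1‖ ≤ 12 := by nlinarith [norm_nonneg s, norm_nonneg (s + 1)]
      have h3 := rpow_le_add_of_mem_Icc ha ht.1 (p := 3 / 2) (q := 5) (r := s.re + 2)
        (by norm_num) ⟨by linarith, by linarith⟩
      have h4 : (-s - 2).re = -(s.re + 2) := by simp; ring
      rw [h4]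
      gcongr)
  convert h using 2
  rw [term]
  push_cast
  ring

lemma differentiable_term {x : ℝ} (hx0 : 0 < x) (n : ℕ) : Differentiable ℂ (term x n) := by
  have h1 : ((n + x : ℝ) : ℂ) ≠ 0 := Complex.ofReal_ne_zero.mpr (by positivity)
  have h2 : ((n + 1 : ℝ) : ℂ) ≠ 0 := Complex.ofReal_ne_zero.mpr (by positivity)
  intro s
  unfold term
  exact ((differentiableAt_id.neg.const_cpow (.inl h1)).sub
    (differentiableAt_id.neg.const_cpow (.inl h2))).sub
    ((differentiableAt_id.const_mul _).mul ((differentiableAt_id.neg.sub_const 1).const_cpow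
      (.inl h2)))

lemma summable_bound (x : ℝ) :
    Summable fun n : ℕ => 12 * (1 / |n + x| ^ (3 / 2 : ℝ) + 1 / |n + x| ^ (5 : ℝ)) :=
  (((Real.summable_one_div_nat_add_rpow x _).mpr (by norm_num)).add
    ((Real.summable_one_div_nat_add_rpow x _).mpr (by norm_num))).mul_left 12

lemma deriv_term_zero {x : ℝ} (hx0 : 0 < x) (n : ℕ) :
    deriv (term x n) 0 =
      ((Real.log (n + 1) - Real.log (x + n) - (1 - x) * (n + 1 : ℝ)⁻¹ : ℝ) : ℂ) := by
  have h1 : ((n + x : ℝ) : ℂ) ≠ 0 := Complex.ofReal_ne_zero.mpr (by positivity)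
  have h2 : ((n + 1 : ℝ) : ℂ) ≠ 0 := Complex.ofReal_ne_zero.mpr (by positivity)
  have hid : HasDerivAt (fun s : ℂ => -s) (-1) 0 := hasDerivAt_neg 0
  have h := ((hid.const_cpow (.inl h1)).sub (hid.const_cpow (.inl h2))).sub
    (((hasDerivAt_id (0 : ℂ)).const_mul (1 - x : ℂ)).mul
      ((hid.sub_const 1).const_cpow (.inl h2)))
  refine (HasDerivAt.deriv (f := term x n) h).trans ?_
  rw [← Complex.ofReal_log (by positivity), ← Complex.ofReal_log (by positivity)]
  simp [Complex.cpow_neg_one]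
  rw [add_comm x]
  ring

lemma hurwitzZeta_sub_riemannZeta_eq_of_one_lt_re {x : ℝ} (hx0 : 0 < x) (hx1 : x ≤ 1) {s : ℂ}
    (hs : 1 < s.re) :
    HurwitzZeta.hurwitzZeta (x : UnitAddCircle) s - riemannZeta s =
      ∑' n, term x n s + (1 - x) * (1 + s * riemannZeta₀ (s + 1)) := by
  have hs0 : s ≠ 0 := by rintro rfl; norm_num at hs
  have key : ∀ {s : ℂ}, 1 < s.re →
      HasSum (fun n : ℕ => ((n + 1 : ℝ) : ℂ) ^ (-s)) (riemannZeta s) := fun {s} hs => by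
    have h := HurwitzZeta.hasSum_hurwitzZeta_of_one_lt_re (a := 1) (by simp) hs
    rw [show ((1 : ℝ) : UnitAddCircle) = 0 from AddCircle.coe_period 1,
      HurwitzZeta.hurwitzZeta_zero] at h
    simpa [Complex.cpow_neg] using h
  have h1 : HasSum (fun n : ℕ => ((n + x : ℝ) : ℂ) ^ (-s)) (HurwitzZeta.hurwitzZeta x s) := by
    simpa [Complex.cpow_neg] using
      HurwitzZeta.hasSum_hurwitzZeta_of_one_lt_re (a := x) ⟨hx0.le, hx1⟩ hs
  have h3 := (key (s := s + 1) (by simp; linarith)).mul_left ((1 - x) * s : ℂ)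
  have h := (h1.sub (key hs)).sub h3
  have h4 : ∑' n, term x n s = HurwitzZeta.hurwitzZeta x s - riemannZeta s
      - (1 - x) * s * riemannZeta (s + 1) := by
    rw [← h.tsum_eq]
    simp only [term, neg_add']
  rw [h4, riemannZeta_eq_inv_sub_add (s := s + 1) (by simpa using hs0),
    add_sub_cancel_right]
  field_simp
  ring

lemma hurwitzZeta_sub_riemannZeta_eqOn {x : ℝ} (hx0 : 0 < x) (hx1 : x ≤ 1) :
    Set.EqOn (fun s => HurwitzZeta.hurwitzZeta (x : UnitAddCircle) s - riemannZeta s)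
      (fun s => ∑' n, term x n s + (1 - x) * (1 + s * riemannZeta₀ (s + 1))) region := by
  refine AnalyticOnNhd.eqOn_of_preconnected_of_eventuallyEq (𝕜 := ℂ) (z₀ := 2)
    ?_ ?_ isPreconnected_region two_mem_region ?_
  · have h := HurwitzZeta.differentiable_hurwitzZeta_sub_hurwitzZeta (x : UnitAddCircle) 0
    rw [HurwitzZeta.hurwitzZeta_zero] at h
    exact h.differentiableOn.analyticOnNhd isOpen_region
  · refine DifferentiableOn.analyticOnNhd (.add ?_ ?_) isOpen_region
    · exact Complex.differentiableOn_tsum_of_summable_norm (summable_bound x)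
        (fun n => (differentiable_term hx0 n).differentiableOn) isOpen_region
        (fun n s hs => norm_term_le hx0 hx1 n hs)
    · fun_prop
  · filter_upwards [(isOpen_lt continuous_const Complex.continuous_re).mem_nhds
      (show (1 : ℝ) < (2 : ℂ).re by norm_num)] with s hs
    exact hurwitzZeta_sub_riemannZeta_eq_of_one_lt_re hx0 hx1 hs

lemma sum_log_sub_log_eq {x : ℝ} (n : ℕ) :
    ∑ m ∈ Finset.range (n + 1),
      (Real.log (m + 1) - Real.log (x + m) - (1 - x) * (m + 1 : ℝ)⁻¹) =
    Real.BohrMollerup.logGammaSeq x n + (1 - x) * (Real.log (n + 1) - harmonic (n + 1))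
      + x * (Real.log (n + 1) - Real.log n) := by
  have h1 : ∀ n : ℕ, ∑ m ∈ Finset.range n, Real.log ((m : ℝ) + 1) = Real.log n.factorial := by
    intro n
    induction n with
    | zero => simp
    | succ k ih =>
      rw [Finset.sum_range_succ, ih, Nat.factorial_succ, Nat.cast_mul,
        Real.log_mul (by positivity) (by positivity)]
      push_cast
      ring
  rw [Finset.sum_sub_distrib, Finset.sum_sub_distrib, ← Finset.mul_sum,
    Finset.sum_range_succ (fun m : ℕ => Real.log ((m : ℝ) + 1)), h1,
    Real.BohrMollerup.logGammaSeq, harmonic]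
  push_cast
  ring

lemma tendsto_log_add_one_sub_log :
    Tendsto (fun n : ℕ => Real.log (n + 1) - Real.log n) atTop (𝓝 0) := by
  simpa using Real.tendsto_harmonic_sub_log.sub Real.tendsto_harmonic_sub_log_add_one

lemma tendsto_sum_log_sub_log {x : ℝ} (hx0 : 0 < x) :
    Tendsto (fun n : ℕ => ∑ m ∈ Finset.range n,
      (Real.log (m + 1) - Real.log (x + m) - (1 - x) * (m + 1 : ℝ)⁻¹)) atTop
      (𝓝 (Real.log (Real.Gamma x) - (1 - x) * Real.eulerMascheroniConstant)) := by
  rw [← tendsto_add_atTop_iff_nat 1]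
  simp only [sum_log_sub_log_eq]
  have h2 := Real.tendsto_harmonic_sub_log.comp (tendsto_add_atTop_nat 1)
  have h := ((Real.BohrMollerup.tendsto_log_gamma hx0).add (h2.const_mul (-(1 - x)))).add
    (tendsto_log_add_one_sub_log.const_mul x)
  convert h using 2
  · simp only [Function.comp_apply]
    push_cast
    ring
  · ring

lemma deriv_tsum_term_zero {x : ℝ} (hx0 : 0 < x) (hx1 : x ≤ 1) :
    deriv (fun s => ∑' n, term x n s) 0 =
      ((Real.log (Real.Gamma x) - (1 - x) * Real.eulerMascheroniConstant : ℝ) : ℂ) := by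
  have h := (Complex.hasSum_deriv_of_summable_norm (summable_bound x)
    (fun n => (differentiable_term hx0 n).differentiableOn) isOpen_region
    (fun n s hs => norm_term_le hx0 hx1 n hs) zero_mem_region).tendsto_sum_nat
  refine tendsto_nhds_unique h ?_
  simp only [deriv_term_zero hx0, ← Complex.ofReal_sum]
  exact (Complex.continuous_ofReal.tendsto _).comp (tendsto_sum_log_sub_log hx0)

lemma deriv_hurwitzZeta_sub_riemannZeta_zero {x : ℝ} (hx0 : 0 < x) (hx1 : x ≤ 1) :
    deriv (fun s => HurwitzZeta.hurwitzZeta (x : UnitAddCircle) s - riemannZeta s) 0 =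
      (Real.log (Real.Gamma x) : ℂ) := by
  have hU := isOpen_region.mem_nhds zero_mem_region
  rw [((hurwitzZeta_sub_riemannZeta_eqOn hx0 hx1).eventuallyEq_of_mem hU).deriv_eq]
  have h1 : HasDerivAt (fun s => ∑' n, term x n s) _ 0 :=
    ((Complex.differentiableOn_tsum_of_summable_norm (summable_bound x)
      (fun n => (differentiable_term hx0 n).differentiableOn) isOpen_region
      (fun n s hs => norm_term_le hx0 hx1 n hs)).differentiableAt hU).hasDerivAt
  have h2 : HasDerivAt (fun s : ℂ => riemannZeta₀ (s + 1))
      (deriv (fun s : ℂ => riemannZeta₀ (s + 1)) 0) 0 :=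
    DifferentiableAt.hasDerivAt (by fun_prop)
  have h := h1.add ((((hasDerivAt_id (0 : ℂ)).mul h2).const_add 1).const_mul (1 - x : ℂ))
  refine (HasDerivAt.deriv h).trans ?_
  rw [deriv_tsum_term_zero hx0 hx1]
  simp

end LerchFormula

theorem stmt_6 (x : ℝ) (hx0 : 0 < x) (hx1 : x ≤ 1) :
    deriv (fun s : ℂ => HurwitzZeta.hurwitzZeta (↑x : UnitAddCircle) s) 0
      = ((Real.log (Real.Gamma x) - (1 / 2) * Real.log (2 * Real.pi) : ℝ) : ℂ) := by
  have h := LerchFormula.deriv_hurwitzZeta_sub_riemannZeta_zero hx0 hx1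
  rw [deriv_fun_sub (HurwitzZeta.differentiableAt_hurwitzZeta _ zero_ne_one)
    (differentiableAt_riemannZeta zero_ne_one), deriv_riemannZeta_zero, sub_eq_iff_eq_add] at h
  rw [h]
  push_cast [Complex.ofReal_log (show 0 ≤ 2 * Real.pi by positivity)]
  ring
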